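/- Reproducing kernel identity for the QP-WPT: let f ∈ L¹(ℝ) ∩ L²(ℝ), let ψ ∈ L¹(ℝ) ∩ L²(ℝ) with ‖ψ‖_{L²(ℝ)} = 1, and fix α > 0. Then for every (ξ₀, β₀) ∈ ℝ², W^μ_f(ξ₀, β₀, α) = ∫_ℝ ∫_ℝ W^μ_f(ξ, β, α) · K_{ψ,μ}(ξ, β; ξ₀, β₀) dξ dβ, where K_{ψ,μ}(ξ, β; ξ₀, β₀) = ∫_ℝ ψ^μ_{ξ,β,α}(t) · conj(ψ^μ_{ξ₀,β₀,α}(t)) dt and ψ^μ_{ξ,β,α}(t) = conj(√(b/(2πi))) · e^{−i(2at² + btξ + cξ² + 2dt + eξ − aβ² − dβ)} · α^{−1/2} ψ((t − β)/α). -/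

import Mathlib

open MeasureTheory Complex

/-- The constant √(b/(2πi)) = √(b/(2π))·e^{−iπ/4}. -/
noncomputable def qpConst (b : ℝ) : ℂ :=
  (Real.sqrt (b / (2 * Real.pi)) : ℂ) * Complex.exp (-((Real.pi / 4 : ℝ) : ℂ) * Complex.I)

/-- The dilation ψ_α(t) = α^{−1/2} ψ(t/α). -/
noncomputable def dil (ψ : ℝ → ℂ) (α : ℝ) (t : ℝ) : ℂ :=
  ((α ^ (-(1 / 2 : ℝ)) : ℝ) : ℂ) * ψ (t / α)

/-- The quadratic-phase Fourier transform. -/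
noncomputable def QPFT (a b c d e : ℝ) (f : ℝ → ℂ) (ξ : ℝ) : ℂ :=
  qpConst b * ∫ t : ℝ, f t *
    Complex.exp (Complex.I * ((a * t ^ 2 + b * t * ξ + c * ξ ^ 2 + d * t + e * ξ : ℝ) : ℂ))

/-- The quadratic-phase wave packet transform of `f` with respect to the wavelet `ψ`. -/
noncomputable def QPWPT (a b c d e : ℝ) (ψ f : ℝ → ℂ) (ξ β α : ℝ) : ℂ :=
  qpConst b * ∫ t : ℝ,
    Complex.exp (Complex.I * ((2 * a * t ^ 2 + b * t * ξ + c * ξ ^ 2 + 2 * d * t + e * ξ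
      - a * β ^ 2 - d * β : ℝ) : ℂ)) * f t * (starRingEnd ℂ) (dil ψ α (t - β))

/-- The analyzing packet ψ^μ_{ξ,β,α}. -/
noncomputable def qpwPacket (a b c d e : ℝ) (ψ : ℝ → ℂ) (ξ β α : ℝ) (t : ℝ) : ℂ :=
  (starRingEnd ℂ) (qpConst b) *
    Complex.exp (-Complex.I * ((2 * a * t ^ 2 + b * t * ξ + c * ξ ^ 2 + 2 * d * t + e * ξ
      - a * β ^ 2 - d * β : ℝ) : ℂ)) * dil ψ α (t - β)


open FourierTransform SchwartzMap

lemma aux_continuous_fourier (u : ℝ → ℂ) (h1 : Integrable u volume) : Continuous (𝓕 u) :=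
  VectorFourier.fourierIntegral_continuous Real.continuous_fourierChar
    (L := innerₗ ℝ) continuous_inner h1

lemma aux_fourier_Lp (u : ℝ → ℂ) (h1 : Integrable u volume) (h2 : MemLp u 2 volume) :
    ((𝓕 (h2.toLp u) : Lp ℂ 2 (volume : Measure ℝ)) : ℝ → ℂ) =ᵐ[volume] 𝓕 u := by
  apply ae_eq_of_integral_contDiff_smul_eq
  · exact (Lp.memLp _).locallyIntegrable (by norm_num)
  · exact (aux_continuous_fourier u h1).locallyIntegrable
  · intro g g_smooth g_cpt
    have hg₁ : HasCompactSupport (Complex.ofRealCLM ∘ g) := g_cpt.comp_left rfl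
    have hg₂ : ContDiff ℝ (⊤ : ℕ∞) (Complex.ofRealCLM ∘ g) := by fun_prop
    set G : 𝓢(ℝ, ℂ) := hg₁.toSchwartzMap hg₂ with hG
    have hGv : ∀ x, G x = (g x : ℂ) := fun x => rfl
    have e1 := congrArg (fun T => T G) (Lp.fourier_toTemperedDistribution_eq (h2.toLp u))
    simp only [TemperedDistribution.fourier_apply, Lp.toTemperedDistribution_apply] at e1
    have e2 : ∫ ξ, (𝓕 (G : ℝ → ℂ)) ξ • u ξ = ∫ x, G x • 𝓕 u x := by
      simpa using! VectorFourier.integral_fourierIntegral_smul_eq_flip (L := innerₗ ℝ)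
        (μ := volume) (ν := volume) Real.continuous_fourierChar continuous_inner G.integrable h1
    have e3 : ∫ x, (𝓕 G) x • (h2.toLp u) x = ∫ ξ, (𝓕 (G : ℝ → ℂ)) ξ • u ξ := by
      apply integral_congr_ae
      filter_upwards [h2.coeFn_toLp] with x hx
      rw [hx, SchwartzMap.fourier_coe]
    rw [e3, e2] at e1
    simpa [hGv] using e1.symm

lemma aux_parseval (u v : ℝ → ℂ) (h1 : Integrable u volume) (h2 : MemLp u 2 volume)
    (k1 : Integrable v volume) (k2 : MemLp v 2 volume) :
    ∫ ξ, 𝓕 u ξ * (starRingEnd ℂ) (𝓕 v ξ) = ∫ t, u t * (starRingEnd ℂ) (v t) := by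
  have := Lp.inner_fourier_eq (k2.toLp v) (h2.toLp u)
  rw [L2.inner_def, L2.inner_def] at this
  calc _ = _ := ?_
    _ = _ := this
    _ = _ := ?_
  · apply integral_congr_ae
    filter_upwards [aux_fourier_Lp u h1 h2, aux_fourier_Lp v k1 k2] with x hx hy
    simp [hx, hy]
  · apply integral_congr_ae
    filter_upwards [h2.coeFn_toLp, k2.coeFn_toLp] with x hx hy
    simp [hx, hy]

lemma aux_parseval_b (b : ℝ) (hb : 0 < b) (u v : ℝ → ℂ) (h1 : Integrable u volume)
    (h2 : MemLp u 2 volume) (k1 : Integrable v volume) (k2 : MemLp v 2 volume) :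
    ∫ ξ : ℝ, (∫ t : ℝ, Complex.exp (Complex.I * ((b * t * ξ : ℝ) : ℂ)) * u t) *
      (starRingEnd ℂ) (∫ t : ℝ, Complex.exp (Complex.I * ((b * t * ξ : ℝ) : ℂ)) * v t)
      = ((2 * Real.pi / b : ℝ) : ℂ) * ∫ t, u t * (starRingEnd ℂ) (v t) := by
  have key : ∀ w : ℝ → ℂ, ∀ ξ : ℝ,
      (∫ t : ℝ, Complex.exp (Complex.I * ((b * t * ξ : ℝ) : ℂ)) * w t)
        = 𝓕 w (-(b / (2 * Real.pi)) * ξ) := by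
    intro w ξ
    rw [Real.fourier_real_eq_integral_exp_smul]
    congr 1; ext t
    rw [smul_eq_mul]
    congr 2
    have : -2 * Real.pi * t * (-(b / (2 * Real.pi)) * ξ) = b * t * ξ := by
      field_simp
    rw [this]; ring
  simp_rw [key]
  rw [Measure.integral_comp_mul_left (fun x => 𝓕 u x * (starRingEnd ℂ) (𝓕 v x)),
    aux_parseval u v h1 h2 k1 k2, inv_neg, abs_neg, inv_div, abs_of_pos (by positivity)]
  simp

lemma aux_sq_int (f : ℝ → ℂ) (hf : MemLp f 2 volume) : Integrable (fun t => ‖f t‖ ^ 2) volume :=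
  (memLp_two_iff_integrable_sq_norm hf.1).1 hf

lemma aux_prod (f g : ℝ → ℂ) (hf : MemLp f 2 volume) (hg : MemLp g 2 volume) (β : ℝ) :
    Integrable (fun t => f t * (starRingEnd ℂ) (g (t - β))) volume := by
  have hg' : MemLp (fun t => g (t - β)) 2 volume :=
    hg.comp_measurePreserving (measurePreserving_sub_right volume β)
  exact hf.integrable_mul hg'.star

lemma aux_conv_int (w : ℝ → ℂ) (hw : Integrable w volume) (g : ℝ → ℂ) (hg : MemLp g 2 volume) :
    Integrable (fun p : ℝ × ℝ => w p.2 * ((‖g (p.2 - p.1)‖ ^ 2 : ℝ) : ℂ))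
      (volume.prod volume) := by
  have hP : Integrable (fun s => ((‖g (-s)‖ ^ 2 : ℝ) : ℂ)) volume :=
    ((aux_sq_int g hg).comp_neg).ofReal
  have := hw.convolution_integrand (ContinuousLinearMap.mul ℂ ℂ) hP
  simpa using this

lemma aux_L2 (f g : ℝ → ℂ) (hf : MemLp f 2 volume) (hg : MemLp g 2 volume) :
    ∀ᵐ β : ℝ, MemLp (fun t => f t * (starRingEnd ℂ) (g (t - β))) 2 volume := by
  have := (aux_conv_int (fun t => ((‖f t‖ ^ 2 : ℝ) : ℂ)) (aux_sq_int f hf).ofReal g hg).prod_right_ae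
  filter_upwards [this] with β h
  rw [memLp_two_iff_integrable_sq_norm (aux_prod f g hf hg β).1]
  have h' := h.norm
  refine h'.congr (Filter.Eventually.of_forall fun t => ?_)
  simp [mul_pow]

lemma aux_core (b : ℝ) (hb : 0 < b) (f h g : ℝ → ℂ) (hf : MemLp f 2 volume)
    (hh : MemLp h 2 volume) (hg : MemLp g 2 volume) :
    ∫ β : ℝ, ∫ ξ : ℝ,
      (∫ t : ℝ, Complex.exp (Complex.I * ((b * t * ξ : ℝ) : ℂ)) *
        (f t * (starRingEnd ℂ) (g (t - β)))) *
      (starRingEnd ℂ) (∫ t : ℝ, Complex.exp (Complex.I * ((b * t * ξ : ℝ) : ℂ)) *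
        (h t * (starRingEnd ℂ) (g (t - β))))
      = ((2 * Real.pi / b : ℝ) : ℂ) * ((∫ t, f t * (starRingEnd ℂ) (h t)) *
        ((∫ t, ‖g t‖ ^ 2 : ℝ) : ℂ)) := by
  have hfh : Integrable (fun t => f t * (starRingEnd ℂ) (h t)) volume := by
    simpa using aux_prod f h hf hh 0
  have e1 : ∀ᵐ β : ℝ, (∫ ξ : ℝ,
      (∫ t : ℝ, Complex.exp (Complex.I * ((b * t * ξ : ℝ) : ℂ)) *
        (f t * (starRingEnd ℂ) (g (t - β)))) *
      (starRingEnd ℂ) (∫ t : ℝ, Complex.exp (Complex.I * ((b * t * ξ : ℝ) : ℂ)) *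
        (h t * (starRingEnd ℂ) (g (t - β)))))
      = ((2 * Real.pi / b : ℝ) : ℂ) *
        ∫ t, (f t * (starRingEnd ℂ) (h t)) * ((‖g (t - β)‖ ^ 2 : ℝ) : ℂ) := by
    filter_upwards [aux_L2 f g hf hg, aux_L2 h g hh hg] with β h1 h2
    rw [aux_parseval_b b hb _ _ (aux_prod f g hf hg β) h1 (aux_prod h g hh hg β) h2]
    congr 2; ext t
    have : ((‖g (t - β)‖ ^ 2 : ℝ) : ℂ) = g (t - β) * (starRingEnd ℂ) (g (t - β)) := by
      rw [Complex.mul_conj, Complex.normSq_eq_norm_sq]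
    rw [this]
    simp only [map_mul, Complex.conj_conj]
    ring
  rw [integral_congr_ae e1, integral_const_mul]
  congr 1
  rw [integral_integral_swap (aux_conv_int _ hfh g hg)]
  simp_rw [integral_const_mul]
  rw [← integral_mul_const]
  congr 1; ext t
  congr 1
  rw [integral_complex_ofReal]
  congr 1
  exact integral_sub_left_eq_self (fun s => ‖g s‖ ^ 2) volume t

lemma aux_dil (ψ : ℝ → ℂ) (hψ2 : MemLp ψ 2 volume) (hψnorm : eLpNorm ψ 2 volume = 1)
    (α : ℝ) (hα : 0 < α) :
    MemLp (dil ψ α) 2 volume ∧ ∫ t, ‖dil ψ α t‖ ^ 2 = 1 := by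
  have hn : ∀ t, ‖dil ψ α t‖ ^ 2 = α⁻¹ * ‖ψ (t / α)‖ ^ 2 := by
    intro t
    rw [dil, norm_mul, mul_pow, Complex.norm_real, Real.norm_eq_abs, sq_abs, ← Real.rpow_natCast,
      ← Real.rpow_mul hα.le]
    norm_num
    left
    exact Real.rpow_neg_one α
  have hI := aux_sq_int ψ hψ2
  have hmeas : AEStronglyMeasurable (dil ψ α) volume := by
    have : Measure.QuasiMeasurePreserving (fun t : ℝ => t / α) volume volume := by
      simp_rw [div_eq_inv_mul]
      refine ⟨by fun_prop, ?_⟩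
      have := Real.map_volume_mul_left (a := α⁻¹) (by positivity)
      rw [this]
      exact Measure.smul_absolutelyContinuous
    exact (hψ2.1.comp_quasiMeasurePreserving this).const_mul _
  refine ⟨?_, ?_⟩
  · rw [memLp_two_iff_integrable_sq_norm hmeas]
    simp_rw [hn]
    exact (hI.comp_div hα.ne').const_mul _
  · simp_rw [hn]
    rw [integral_const_mul, Measure.integral_comp_div (fun t => ‖ψ t‖ ^ 2), abs_of_pos hα,
      smul_eq_mul, inv_mul_cancel_left₀ hα.ne']
    have := hψ2.eLpNorm_eq_integral_rpow_norm (by norm_num) (by norm_num)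
    rw [hψnorm] at this
    simp only [ENNReal.toReal_ofNat, Real.rpow_ofNat] at this
    have h0 : 0 ≤ ∫ t, ‖ψ t‖ ^ 2 := integral_nonneg fun _ => by positivity
    have h2 := (ENNReal.ofReal_eq_one.1 this.symm)
    first
      | rw [← one_div, ← Real.sqrt_eq_rpow] at h2
      | rw [← Real.sqrt_eq_rpow] at h2
    exact Real.sqrt_eq_one.1 h2

lemma aux_const (b : ℝ) (hb : 0 < b) :
    qpConst b * (starRingEnd ℂ) (qpConst b) = ((b / (2 * Real.pi) : ℝ) : ℂ) := by
  rw [Complex.mul_conj, Complex.normSq_eq_norm_sq, qpConst, norm_mul]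
  have : -((Real.pi / 4 : ℝ) : ℂ) * Complex.I = ((-(Real.pi / 4) : ℝ) : ℂ) * Complex.I := by
    push_cast; ring
  rw [this, Complex.norm_exp_ofReal_mul_I, mul_one, Complex.norm_real, Real.norm_eq_abs, sq_abs,
    Real.sq_sqrt (by positivity)]

lemma aux_phase_memLp (f : ℝ → ℂ) (hf : MemLp f 2 volume) (p : ℝ → ℝ) (hp : Continuous p) :
    MemLp (fun t => Complex.exp (Complex.I * (p t : ℂ)) * f t) 2 volume := by
  have hm : AEStronglyMeasurable (fun t => Complex.exp (Complex.I * (p t : ℂ)) * f t) volume :=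
    (Continuous.aestronglyMeasurable (by fun_prop)).mul hf.1
  refine hf.of_le hm (Filter.Eventually.of_forall fun t => ?_)
  rw [norm_mul, mul_comm Complex.I, Complex.norm_exp_ofReal_mul_I, one_mul]

theorem qpwpt_reproducing_kernel (a b c d e : ℝ) (hb : 0 < b) (f ψ : ℝ → ℂ)
    (hf1 : Integrable f volume) (hf2 : MemLp f 2 volume)
    (hψ1 : Integrable ψ volume) (hψ2 : MemLp ψ 2 volume)
    (hψnorm : eLpNorm ψ 2 volume = 1) (α : ℝ) (hα : 0 < α) (ξ₀ β₀ : ℝ) :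
    QPWPT a b c d e ψ f ξ₀ β₀ α
      = ∫ β : ℝ, ∫ ξ : ℝ, QPWPT a b c d e ψ f ξ β α *
          ∫ t : ℝ, qpwPacket a b c d e ψ ξ β α t *
            (starRingEnd ℂ) (qpwPacket a b c d e ψ ξ₀ β₀ α t) := by
  obtain ⟨hg, hgn⟩ := aux_dil ψ hψ2 hψnorm α hα
  set g := dil ψ α with hgdef
  set q : ℝ → ℝ := fun t => 2 * a * t ^ 2 + 2 * d * t with hq
  have hqc : Continuous q := by rw [hq]; fun_prop
  set k : ℝ → ℂ := qpwPacket a b c d e ψ ξ₀ β₀ α with hk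
  have hkL : MemLp k 2 volume := by
    have hg' : MemLp (fun t => g (t - β₀)) 2 volume :=
      hg.comp_measurePreserving (measurePreserving_sub_right volume β₀)
    have h1 := (aux_phase_memLp _ hg' (fun t => -(2 * a * t ^ 2 + b * t * ξ₀ + c * ξ₀ ^ 2 +
      2 * d * t + e * ξ₀ - a * β₀ ^ 2 - d * β₀)) (by fun_prop)).const_mul
        ((starRingEnd ℂ) (qpConst b))
    refine (memLp_congr_ae (Filter.Eventually.of_forall fun t => ?_)).1 h1
    simp only [hk, qpwPacket, ← hgdef]
    rw [← mul_assoc]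
    congr 3
    push_cast; ring
  have core := aux_core b hb _ _ g (aux_phase_memLp f hf2 q hqc) (aux_phase_memLp k hkL q hqc) hg
  have hexp : ∀ x : ℝ, (starRingEnd ℂ) (Complex.exp (Complex.I * (x : ℂ)))
      = Complex.exp (-Complex.I * (x : ℂ)) := by
    intro x
    rw [← Complex.exp_conj]; simp
  have hone : ∀ x : ℝ, Complex.exp (Complex.I * (x : ℂ)) * Complex.exp (-Complex.I * (x : ℂ)) = 1 := by
    intro x
    rw [← Complex.exp_add]; simp
  have hW : ∀ w : ℝ → ℂ, ∀ ξ β : ℝ, (∫ t : ℝ,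
    Complex.exp (Complex.I * ((2 * a * t ^ 2 + b * t * ξ + c * ξ ^ 2 + 2 * d * t + e * ξ
      - a * β ^ 2 - d * β : ℝ) : ℂ)) * w t * (starRingEnd ℂ) (g (t - β)))
      = Complex.exp (Complex.I * ((c * ξ ^ 2 + e * ξ - a * β ^ 2 - d * β : ℝ) : ℂ)) *
        ∫ t : ℝ, Complex.exp (Complex.I * ((b * t * ξ : ℝ) : ℂ)) *
        ((Complex.exp (Complex.I * (q t : ℂ)) * w t) * (starRingEnd ℂ) (g (t - β))) := by
    intro w ξ β
    rw [← integral_const_mul]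
    congr 1; ext t
    rw [← mul_assoc, ← mul_assoc, ← mul_assoc, ← Complex.exp_add, ← Complex.exp_add]
    congr 3
    simp only [hq]
    push_cast; ring
  have hK : ∀ ξ β : ℝ, (∫ t : ℝ, qpwPacket a b c d e ψ ξ β α t * (starRingEnd ℂ) (k t))
      = (starRingEnd ℂ) (qpConst b) * (starRingEnd ℂ) (∫ t : ℝ,
    Complex.exp (Complex.I * ((2 * a * t ^ 2 + b * t * ξ + c * ξ ^ 2 + 2 * d * t + e * ξ
      - a * β ^ 2 - d * β : ℝ) : ℂ)) * k t * (starRingEnd ℂ) (g (t - β))) := by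
    intro ξ β
    rw [← integral_conj, ← integral_const_mul]
    congr 1; ext t
    rw [map_mul, map_mul, hexp, Complex.conj_conj, qpwPacket, ← hgdef]
    ring
  have hinner : ∀ ξ β : ℝ, QPWPT a b c d e ψ f ξ β α *
      ∫ t : ℝ, qpwPacket a b c d e ψ ξ β α t * (starRingEnd ℂ) (k t)
      = ((b / (2 * Real.pi) : ℝ) : ℂ) * ((∫ t : ℝ, Complex.exp (Complex.I * ((b * t * ξ : ℝ) : ℂ)) *
        ((Complex.exp (Complex.I * (q t : ℂ)) * f t) * (starRingEnd ℂ) (g (t - β)))) *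
      (starRingEnd ℂ) (∫ t : ℝ, Complex.exp (Complex.I * ((b * t * ξ : ℝ) : ℂ)) *
        ((Complex.exp (Complex.I * (q t : ℂ)) * k t) * (starRingEnd ℂ) (g (t - β))))) := by
    intro ξ β
    rw [hK, hW, QPWPT, ← hgdef, hW, map_mul, hexp, ← aux_const b hb]
    have h1 := hone (c * ξ ^ 2 + e * ξ - a * β ^ 2 - d * β)
    generalize Complex.exp (Complex.I * ((c * ξ ^ 2 + e * ξ - a * β ^ 2 - d * β : ℝ) : ℂ)) = X at *
    generalize Complex.exp (-Complex.I * ((c * ξ ^ 2 + e * ξ - a * β ^ 2 - d * β : ℝ) : ℂ)) = Y at *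
    generalize (∫ t : ℝ, Complex.exp (Complex.I * ((b * t * ξ : ℝ) : ℂ)) *
        ((Complex.exp (Complex.I * (q t : ℂ)) * f t) * (starRingEnd ℂ) (g (t - β)))) = A
    generalize (starRingEnd ℂ) (∫ t : ℝ, Complex.exp (Complex.I * ((b * t * ξ : ℝ) : ℂ)) *
        ((Complex.exp (Complex.I * (q t : ℂ)) * k t) * (starRingEnd ℂ) (g (t - β)))) = B
    linear_combination (qpConst b * (starRingEnd ℂ) (qpConst b) * A * B) * h1
  simp_rw [hinner, integral_const_mul]
  rw [core, hgn, Complex.ofReal_one, mul_one, ← mul_assoc, ← Complex.ofReal_mul]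
  have : b / (2 * Real.pi) * (2 * Real.pi / b) = 1 := by field_simp
  rw [this, Complex.ofReal_one, one_mul, QPWPT, ← integral_const_mul]
  congr 1; ext t
  have h1 := hone (q t)
  have h2 := hexp (q t)
  have h3 : (starRingEnd ℂ) (k t) = qpConst b * Complex.exp (Complex.I * ((2 * a * t ^ 2 + b * t * ξ₀ + c * ξ₀ ^ 2 + 2 * d * t + e * ξ₀
      - a * β₀ ^ 2 - d * β₀ : ℝ) : ℂ)) * (starRingEnd ℂ) (g (t - β₀)) := by
    rw [hk, qpwPacket, ← hgdef, ← hexp, map_mul, map_mul, Complex.conj_conj, Complex.conj_conj]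
  rw [map_mul, h2, h3]
  linear_combination (-(f t * (qpConst b * Complex.exp (Complex.I * ((2 * a * t ^ 2 + b * t * ξ₀ + c * ξ₀ ^ 2 + 2 * d * t + e * ξ₀
      - a * β₀ ^ 2 - d * β₀ : ℝ) : ℂ)) * (starRingEnd ℂ) (g (t - β₀))))) * h1
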